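/- Let n = p + q and for each subset A ⊆ {1,…,n} let e_A be the corresponding basis element of Cl_{p,q} (product of generators with increasing indices, e_∅ = e); each e_A is invertible. Define the linear operator F(U) := 2^{−n} · Σ_{A ⊆ {1,…,n}} (e_A)^{−1} U e_A on Cl_{p,q}. Then: (1) F(U) lies in the center Cen(Cl_{p,q}) for every U ∈ Cl_{p,q}; (2) F(U) = U for every U ∈ Cen(Cl_{p,q}); consequently (3) F ∘ F = F, i.e. F is the projection onto the center of Cl_{p,q}. -/

import Mathlib

open CliffordAlgebra

/-- The quadratic form of signature `(p, q)` on `ℝ^(p+q)`: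
`Q(x) = x₁² + ⋯ + x_p² − x_{p+1}² − ⋯ − x_{p+q}²`. -/
noncomputable def Qpq (p q : ℕ) : QuadraticForm ℝ (Fin (p + q) → ℝ) :=
  QuadraticMap.weightedSumSquares ℝ (fun i : Fin (p + q) => if (i : ℕ) < p then (1 : ℝ) else -1)

/-- The real Clifford algebra `Cl_{p,q}`. -/
noncomputable abbrev Cl (p q : ℕ) : Type := CliffordAlgebra (Qpq p q)

/-- The generators `e_a` of `Cl_{p,q}`. -/
noncomputable def gen (p q : ℕ) (i : Fin (p + q)) : Cl p q :=
  ι (Qpq p q) (Pi.single i 1)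

/-- The basis element `e_A` of `Cl_{p,q}` attached to an ordered multi-index `A`:
the product of the generators with indices in `A`, in increasing order (`e_∅ = 1`). -/
noncomputable def basisEl (p q : ℕ) (A : Finset (Fin (p + q))) : Cl p q :=
  ((A.sort (· ≤ ·)).map (gen p q)).prod


/-- The averaging (Reynolds) operator `F(U) = 2^{−n} Σ_A (e_A)⁻¹ U e_A`. -/
noncomputable def Favg (p q : ℕ) (U : Cl p q) : Cl p q :=
  ((2 : ℝ) ^ (p + q))⁻¹ •
    ∑ A : Finset (Fin (p + q)), Ring.inverse (basisEl p q A) * U * basisEl p q A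

section aux
variable {R : Type*} [Ring R] {n : ℕ}

def PM (u v : Rˣ) : Prop := u = v ∨ u = -v

theorem PM.rfl' (u : Rˣ) : PM u u := Or.inl rfl

theorem PM.trans' {u v w : Rˣ} (h : PM u v) (k : PM v w) : PM u w := by
  rcases h with rfl | rfl <;> rcases k with rfl | rfl <;> simp [PM]

theorem PM.symm' {u v : Rˣ} (h : PM u v) : PM v u := by
  rcases h with rfl | rfl <;> simp [PM]

theorem PM.mul' {u v w x : Rˣ} (h : PM u v) (k : PM w x) : PM (u * w) (v * x) := by
  rcases h with rfl | rfl <;> rcases k with rfl | rfl <;> simp [PM]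

theorem PM.conj {u v : Rˣ} (h : PM u v) (U : R) :
    ((u⁻¹ : Rˣ) : R) * U * u = ((v⁻¹ : Rˣ) : R) * U * v := by
  rcases h with rfl | rfl
  · rfl
  · have : (-v)⁻¹ = -v⁻¹ := inv_eq_of_mul_eq_one_right (by simp)
    rw [this]; simp

theorem PM.perm (g : Fin n → Rˣ) (hc : ∀ i j, PM (g i * g j) (g j * g i))
    {l l' : List (Fin n)} (h : l.Perm l') : PM (l.map g).prod (l'.map g).prod := by
  induction h with
  | nil => exact PM.rfl' _
  | cons x _ ih => simpa using (PM.rfl' (g x)).mul' ih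
  | swap x y l => simpa [mul_assoc] using (hc y x).mul' (PM.rfl' (l.map g).prod)
  | trans _ _ ih ih' => exact ih.trans' ih'

def BU (g : Fin n → Rˣ) (A : Finset (Fin n)) : Rˣ := ((A.sort (· ≤ ·)).map g).prod

theorem BU_insert (g : Fin n → Rˣ) (hc : ∀ i j, PM (g i * g j) (g j * g i))
    (A : Finset (Fin n)) (i : Fin n) (h : i ∉ A) : PM (BU g (insert i A)) (BU g A * g i) := by
  have : ((insert i A).sort (· ≤ ·)).Perm (A.sort (· ≤ ·) ++ [i]) := by
    rw [List.perm_ext_iff_of_nodup (Finset.sort_nodup _ _)]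
    · intro a; simp [or_comm]
    · simp [List.nodup_append, h]
  simpa [BU] using PM.perm g hc this

theorem BU_symmDiff (g : Fin n → Rˣ) (hc : ∀ i j, PM (g i * g j) (g j * g i))
    (hs : ∀ i, PM (g i * g i) 1)
    (A : Finset (Fin n)) (i : Fin n) : PM (BU g A * g i) (BU g (symmDiff A {i})) := by
  by_cases h : i ∈ A
  · have e : symmDiff A {i} = A.erase i := by
      ext a; simp [Finset.mem_symmDiff]; grind
    rw [e]
    have := BU_insert g hc (A.erase i) i (by simp)
    rw [Finset.insert_erase h] at this
    refine (this.mul' (PM.rfl' (g i))).trans' ?_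
    simpa [mul_assoc] using (PM.rfl' (BU g (A.erase i))).mul' (hs i)
  · have e : symmDiff A {i} = insert i A := by
      ext a; simp [Finset.mem_symmDiff]; grind
    rw [e]
    exact (BU_insert g hc A i h).symm'

theorem avg_comm (g : Fin n → Rˣ) (hc : ∀ i j, PM (g i * g j) (g j * g i))
    (hs : ∀ i, PM (g i * g i) 1) (U : R) (i : Fin n) :
    (∑ A, (((BU g A)⁻¹ : Rˣ) : R) * U * BU g A) * g i
      = g i * (∑ A, (((BU g A)⁻¹ : Rˣ) : R) * U * BU g A) := by
  have hinv : Function.Involutive (fun A : Finset (Fin n) => symmDiff A {i}) := fun A => by simp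
  have key : (((g i)⁻¹ : Rˣ) : R) * (∑ A, (((BU g A)⁻¹ : Rˣ) : R) * U * BU g A) * g i
      = ∑ A, (((BU g A)⁻¹ : Rˣ) : R) * U * BU g A := by
    conv_rhs => rw [← Equiv.sum_comp hinv.toPerm]
    rw [Finset.mul_sum, Finset.sum_mul]
    refine Finset.sum_congr rfl fun A _ => ?_
    have := (BU_symmDiff g hc hs A i).conj U
    simp only [Function.Involutive.coe_toPerm]
    rw [← this]
    simp [mul_assoc]
  conv_rhs => rw [← key]
  simp [mul_assoc]

end aux

theorem gen_sq (p q : ℕ) (i : Fin (p + q)) :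
    gen p q i * gen p q i = 1 ∨ gen p q i * gen p q i = -1 := by
  have : Qpq p q (Pi.single i 1) = if (i : ℕ) < p then (1 : ℝ) else -1 := by
    simp [Qpq, QuadraticMap.weightedSumSquares_apply, Pi.single_apply]
  simp only [gen, ι_sq_scalar, this]
  split_ifs <;> simp

theorem gen_anti (p q : ℕ) (i j : Fin (p + q)) (h : i ≠ j) :
    gen p q i * gen p q j = -(gen p q j * gen p q i) := by
  have : QuadraticMap.polar (Qpq p q) (Pi.single i 1) (Pi.single j 1) = 0 := by
    simp only [QuadraticMap.polar, Qpq, QuadraticMap.weightedSumSquares_apply,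
      ← Finset.sum_sub_distrib]
    refine Finset.sum_eq_zero fun k _ => ?_
    by_cases hi : k = i
    · subst hi; simp [Pi.single_apply, h]
    · simp [Pi.single_apply, hi]
  rw [eq_neg_iff_add_eq_zero]
  simp only [gen, ι_mul_ι_add_swap, this, map_zero]

theorem gen_isUnit (p q : ℕ) (i : Fin (p + q)) : IsUnit (gen p q i) := by
  rcases gen_sq p q i with h | h
  · exact ⟨⟨_, _, h, h⟩, rfl⟩
  · exact ⟨⟨gen p q i, -gen p q i, by simp [h], by simp [h]⟩, rfl⟩

noncomputable def gU (p q : ℕ) (i : Fin (p + q)) : (Cl p q)ˣ := (gen_isUnit p q i).unit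

theorem gU_coe (p q : ℕ) (i : Fin (p + q)) : (gU p q i : Cl p q) = gen p q i := rfl

theorem BU_coe (p q : ℕ) (A : Finset (Fin (p + q))) :
    (BU (gU p q) A : Cl p q) = basisEl p q A := by
  rw [BU, basisEl, ← Units.coeHom_apply, map_list_prod, List.map_map]
  rfl

theorem gU_comm (p q : ℕ) (i j : Fin (p + q)) :
    PM (gU p q i * gU p q j) (gU p q j * gU p q i) := by
  by_cases h : i = j
  · subst h; exact PM.rfl' _
  · right; ext; simpa [gU_coe] using gen_anti p q i j h

theorem gU_sq (p q : ℕ) (i : Fin (p + q)) : PM (gU p q i * gU p q i) 1 := by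
  rcases gen_sq p q i with h | h
  · left; ext; simpa [gU_coe] using h
  · right; ext; simpa [gU_coe] using h

theorem comm_all (p q : ℕ) (W : Cl p q) (h : ∀ i, W * gen p q i = gen p q i * W) (V : Cl p q) :
    W * V = V * W := by
  induction V using CliffordAlgebra.induction with
  | algebraMap r => exact (Algebra.commutes r W).symm
  | ι x =>
    have : ι (Qpq p q) x = ∑ i, x i • gen p q i := by
      conv_lhs => rw [pi_eq_sum_univ' x]
      simp only [map_sum, map_smul, gen]
    rw [this, Finset.mul_sum, Finset.sum_mul]
    exact Finset.sum_congr rfl fun i _ => by simp [h i]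
  | mul a b ha hb => rw [← mul_assoc, ha, mul_assoc, hb, mul_assoc]
  | add a b ha hb => rw [mul_add, add_mul, ha, hb]

theorem Favg_eq (p q : ℕ) (U : Cl p q) : Favg p q U = ((2 : ℝ) ^ (p + q))⁻¹ •
    ∑ A, (((BU (gU p q) A)⁻¹ : (Cl p q)ˣ) : Cl p q) * U * BU (gU p q) A := by
  simp only [Favg, ← BU_coe, Ring.inverse_unit]

/-- Each `e_A` is invertible; `F(U)` always lies in the center of `Cl_{p,q}`;
`F` restricts to the identity on the center; hence `F ∘ F = F`
(`F` is the projection onto the center). -/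
theorem averaging_projects_onto_center (p q : ℕ) :
    (∀ A : Finset (Fin (p + q)), IsUnit (basisEl p q A)) ∧
    (∀ U V : Cl p q, Favg p q U * V = V * Favg p q U) ∧
    (∀ U : Cl p q, (∀ V : Cl p q, U * V = V * U) → Favg p q U = U) ∧
    (Favg p q ∘ Favg p q = Favg p q) := by
  have h2 : ∀ U V : Cl p q, Favg p q U * V = V * Favg p q U := by
    intro U
    refine comm_all p q _ fun i => ?_
    rw [Favg_eq, smul_mul_assoc, mul_smul_comm, ← gU_coe,
      avg_comm _ (gU_comm p q) (gU_sq p q)]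
  have h3 : ∀ U : Cl p q, (∀ V : Cl p q, U * V = V * U) → Favg p q U = U := by
    intro U hU
    rw [Favg_eq]
    have : ∀ A, (((BU (gU p q) A)⁻¹ : (Cl p q)ˣ) : Cl p q) * U * BU (gU p q) A = U := by
      intro A
      rw [mul_assoc, hU, Units.inv_mul_cancel_left]
    simp only [this, Finset.sum_const, Finset.card_univ, Fintype.card_finset, Fintype.card_fin]
    rw [← Nat.cast_smul_eq_nsmul ℝ, smul_smul]
    simp
  exact ⟨fun A => ⟨_, BU_coe p q A⟩, h2, h3, funext fun U => h3 _ (h2 U)⟩
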